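/- arXiv:1210.7947 — 2 statements merged into one kernel-verified Lean document; each statement's English description precedes it below -/
import Mathlib

section
/- Let h₁, h₂ : [0,1] → ℝ be differentiable functions such that h₁(r) > 0 for all r ∈ [0,1], h₂(0) = 0, h₂(r) > 0 for all r ∈ (0,1], and h₁(r)·h₂′(r) − h₁′(r)·h₂(r) > 0 for all r ∈ (0,1]. Then the map Ψ : ℝ × [0,1] → ℝ² defined by Ψ(s,r) = (eˢ·h₁(r), eˢ·h₂(r)) is injective. -/
open Set Real

/-!
The contact condition says that the plane curve `(h₁, h₂)` turns counterclockwise, so its slope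
`h₂ / h₁` is strictly increasing. Scaling by `eˢ` does not change the slope, which therefore
determines `r`; the first coordinate then determines `s`.
-/

theorem strictMonoOn_div_of_wronskian_pos {D : Set ℝ} (hD : Convex ℝ D) {f g f' g' : ℝ → ℝ}
    (hf : ContinuousOn f D) (hg : ContinuousOn g D)
    (hf' : ∀ x ∈ interior D, HasDerivWithinAt f (f' x) (interior D) x)
    (hg' : ∀ x ∈ interior D, HasDerivWithinAt g (g' x) (interior D) x)
    (hf₀ : ∀ x ∈ D, f x ≠ 0) (hW : ∀ x ∈ interior D, 0 < f x * g' x - f' x * g x) :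
    StrictMonoOn (fun x ↦ g x / f x) D := by
  have hf₀' : ∀ x ∈ interior D, f x ≠ 0 := fun x hx ↦ hf₀ x (interior_subset hx)
  have hquot : ∀ x ∈ interior D, HasDerivWithinAt (fun x ↦ g x / f x)
      ((g' x * f x - g x * f' x) / f x ^ 2) (interior D) x :=
    fun x hx ↦ (hg' x hx).fun_div (hf' x hx) (hf₀' x hx)
  refine strictMonoOn_of_hasDerivWithinAt_pos hD (hg.div hf hf₀) hquot fun x hx ↦ ?_
  have hnum : 0 < g' x * f x - g x * f' x := by linarith [hW x hx]
  exact div_pos hnum (sq_pos_of_ne_zero (hf₀' x hx))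

theorem injOn_mul_prodMk_mul_of_injOn_div {α G₀ : Type*} [CommGroupWithZero G₀] {D : Set α}
    {f g : α → G₀} (hf₀ : ∀ x ∈ D, f x ≠ 0) (hinj : InjOn (fun x ↦ g x / f x) D) :
    InjOn (fun p : G₀ × α ↦ (p.1 * f p.2, p.1 * g p.2)) ({0}ᶜ ×ˢ D) := by
  rintro ⟨c, x⟩ ⟨hc, hx⟩ ⟨d, y⟩ ⟨hd, hy⟩ h
  obtain ⟨hfst, hsnd⟩ : c * f x = d * f y ∧ c * g x = d * g y := Prod.mk.inj h
  have hslope : g x / f x = g y / f y :=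
    calc g x / f x = c * g x / (c * f x) := (mul_div_mul_left _ _ hc).symm
      _ = d * g y / (d * f y) := by rw [hfst, hsnd]
      _ = g y / f y := mul_div_mul_left _ _ hd
  obtain rfl : x = y := hinj hx hy hslope
  obtain rfl : c = d := mul_right_cancel₀ (hf₀ x hx) hfst
  rfl

theorem open_books_injectivity_of_gluing_map_general {D : Set ℝ} (hD : Convex ℝ D)
    {h₁ h₂ h₁' h₂' : ℝ → ℝ} (hc₁ : ContinuousOn h₁ D) (hc₂ : ContinuousOn h₂ D)
    (hd₁ : ∀ r ∈ interior D, HasDerivWithinAt h₁ (h₁' r) (interior D) r)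
    (hd₂ : ∀ r ∈ interior D, HasDerivWithinAt h₂ (h₂' r) (interior D) r)
    (h₁ne : ∀ r ∈ D, h₁ r ≠ 0)
    (hcontact : ∀ r ∈ interior D, 0 < h₁ r * h₂' r - h₁' r * h₂ r) :
    InjOn (fun p : ℝ × ℝ ↦ (exp p.1 * h₁ p.2, exp p.1 * h₂ p.2)) (univ ×ˢ D) := by
  have hslope : InjOn (fun r ↦ h₂ r / h₁ r) D :=
    (strictMonoOn_div_of_wronskian_pos hD hc₁ hc₂ hd₁ hd₂ h₁ne hcontact).injOn
  have hexp : MapsTo (Prod.map exp id) (univ ×ˢ D) ({0}ᶜ ×ˢ D) :=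
    fun p hp ↦ ⟨exp_ne_zero p.1, hp.2⟩
  exact (injOn_mul_prodMk_mul_of_injOn_div h₁ne hslope).comp
    (exp_injective.prodMap Function.injective_id).injOn hexp

/-- Let `h₁, h₂ : [0,1] → ℝ` be differentiable with `h₁ > 0` on `[0,1]`, `h₂ 0 = 0`,
`h₂ > 0` on `(0,1]`, and the contact condition `h₁ h₂' - h₁' h₂ > 0` on `(0,1]`.
Then `Ψ(s,r) = (eˢ h₁(r), eˢ h₂(r))` is injective on `ℝ × [0,1]`. -/
theorem open_books_injectivity_of_gluing_map
    (h₁ h₂ h₁' h₂' : ℝ → ℝ)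
    (hd₁ : ∀ r ∈ Icc (0:ℝ) 1, HasDerivWithinAt h₁ (h₁' r) (Icc 0 1) r)
    (hd₂ : ∀ r ∈ Icc (0:ℝ) 1, HasDerivWithinAt h₂ (h₂' r) (Icc 0 1) r)
    (h₁pos : ∀ r ∈ Icc (0:ℝ) 1, 0 < h₁ r)
    (h₂zero : h₂ 0 = 0)
    (h₂pos : ∀ r ∈ Ioc (0:ℝ) 1, 0 < h₂ r)
    (hcontact : ∀ r ∈ Ioc (0:ℝ) 1, 0 < h₁ r * h₂' r - h₁' r * h₂ r) :
    ∀ s₁ s₂ : ℝ, ∀ r₁ ∈ Icc (0:ℝ) 1, ∀ r₂ ∈ Icc (0:ℝ) 1,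
      (Real.exp s₁ * h₁ r₁, Real.exp s₁ * h₂ r₁)
        = (Real.exp s₂ * h₁ r₂, Real.exp s₂ * h₂ r₂) →
      (s₁, r₁) = (s₂, r₂) := by
  intro s₁ s₂ r₁ hr₁ r₂ hr₂ h
  have hIoc : interior (Icc (0 : ℝ) 1) ⊆ Ioc 0 1 := interior_Icc.trans_subset Ioo_subset_Ioc_self
  exact open_books_injectivity_of_gluing_map_general (convex_Icc 0 1)
    (fun r hr ↦ (hd₁ r hr).continuousWithinAt) (fun r hr ↦ (hd₂ r hr).continuousWithinAt)
    (fun r hr ↦ (hd₁ r (interior_subset hr)).mono interior_subset)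
    (fun r hr ↦ (hd₂ r (interior_subset hr)).mono interior_subset)
    (fun r hr ↦ (h₁pos r hr).ne') (fun r hr ↦ hcontact r (hIoc hr))
    ⟨mem_univ s₁, hr₁⟩ ⟨mem_univ s₂, hr₂⟩ h
end

section
/- For every c > 0 there exist r₀ > 0, δ ∈ (0, r₀), and smooth functions h₁, h₂ : [0, r₀] → ℝ such that: (i) h₁(r) = c·e^{−r²} and h₂(r) = r² for all r ∈ [0,δ]; (ii) h₁(r) = c·e^{−r} and h₂ is constant for all r ∈ [r₀−δ, r₀]; (iii) h₁(r) > 0 for all r ∈ [0,r₀]; (iv) h₁′(r) < 0 for all r ∈ (0, r₀]; and (v) h₁(r)·h₂′(r) − h₁′(r)·h₂(r) > 0 for all r ∈ (0, r₀]. -/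
open Set Real

/-!
Both coefficients are glued from their two prescribed pieces by a monotone smooth step `s` on
`[0, 1]`: `h = (1 - s) f + s g` has derivative `(1 - s) f' + s g' + s' (g - f)`. Since `r² ≤ r ≤ 1`,
the correction term `s' (g - f)` is nonpositive for `h₁` and nonnegative for `h₂`, so gluing
preserves `h₁' < 0` and `h₂' ≥ 0`. With `h₁, h₂ > 0`, these signs give the contact condition.
-/

noncomputable section

/-- The smooth step rising from `0` to `1` across `[a, b]` and constant on either side; it is meant
for `a < b`, and division by zero makes it identically `0` when `a = b`. -/
def smoothStep (a b x : ℝ) : ℝ :=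
  smoothTransition ((x - a) / (b - a))

namespace smoothStep

variable {a b x : ℝ}

theorem eq_zero_of_le (hab : a ≤ b) (hx : x ≤ a) : smoothStep a b x = 0 :=
  smoothTransition.zero_of_nonpos <|
    div_nonpos_of_nonpos_of_nonneg (sub_nonpos.2 hx) (sub_nonneg.2 hab)

theorem eq_one_of_ge (hab : a < b) (hx : b ≤ x) : smoothStep a b x = 1 :=
  smoothTransition.one_of_one_le <|
    (one_le_div (sub_pos.2 hab)).2 (sub_le_sub_right hx a)

theorem mem_Icc : smoothStep a b x ∈ Icc 0 1 :=
  ⟨smoothTransition.nonneg _, smoothTransition.le_one _⟩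

theorem monotone (hab : a ≤ b) : Monotone (smoothStep a b) := fun _ _ hxy ↦
  smoothTransition.monotone <|
    div_le_div_of_nonneg_right (sub_le_sub_right hxy a) (sub_nonneg.2 hab)

theorem contDiff {n : ℕ∞} : ContDiff ℝ n (smoothStep a b) :=
  smoothTransition.contDiff.comp ((contDiff_id.sub contDiff_const).div_const _)

theorem hasDerivAt : HasDerivAt (smoothStep a b) (deriv (smoothStep a b) x) x :=
  (contDiff.differentiable one_ne_zero x).hasDerivAt

end smoothStep

/-- The smooth interpolation that follows `f` up to `a` and `g` from `b` onwards, passing through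
their convex combinations in between. -/
def smoothBlend {E : Type*} [AddCommGroup E] [Module ℝ E] (a b : ℝ) (f g : ℝ → E) (x : ℝ) : E :=
  AffineMap.lineMap (f x) (g x) (smoothStep a b x)

theorem min_le_lineMap {u v t : ℝ} (ht : t ∈ Icc 0 1) : min u v ≤ AffineMap.lineMap u v t := by
  rw [AffineMap.lineMap_apply_module]
  exact Convex.min_le_combo u v (sub_nonneg.2 ht.2) ht.1 (sub_add_cancel 1 t)

theorem lineMap_le_max {u v t : ℝ} (ht : t ∈ Icc 0 1) : AffineMap.lineMap u v t ≤ max u v := by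
  rw [AffineMap.lineMap_apply_module]
  exact Convex.combo_le_max u v (sub_nonneg.2 ht.2) ht.1 (sub_add_cancel 1 t)

namespace smoothBlend

section Module

variable {E : Type*} [AddCommGroup E] [Module ℝ E] {a b x : ℝ} {f g : ℝ → E}

theorem eq_left (hab : a ≤ b) (hx : x ≤ a) : smoothBlend a b f g x = f x := by
  rw [smoothBlend, smoothStep.eq_zero_of_le hab hx, AffineMap.lineMap_apply_zero]

theorem eq_right (hab : a < b) (hx : b ≤ x) : smoothBlend a b f g x = g x := by
  rw [smoothBlend, smoothStep.eq_one_of_ge hab hx, AffineMap.lineMap_apply_one]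

end Module

section NormedSpace

variable {E : Type*} [NormedAddCommGroup E] [NormedSpace ℝ E] {a b x : ℝ} {f g : ℝ → E}

theorem contDiff {n : ℕ∞} (hf : ContDiff ℝ n f) (hg : ContDiff ℝ n g) :
    ContDiff ℝ n (smoothBlend a b f g) :=
  (smoothStep.contDiff.smul (hg.sub hf)).add hf

theorem hasDerivAt {f' g' : E} (hf : HasDerivAt f f' x) (hg : HasDerivAt g g' x) :
    HasDerivAt (smoothBlend a b f g)
      (AffineMap.lineMap f' g' (smoothStep a b x) + deriv (smoothStep a b) x • (g x - f x)) x := by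
  refine ((smoothStep.hasDerivAt.smul (hg.sub hf)).add hf).congr_deriv ?_
  rw [AffineMap.lineMap_apply_module', Pi.sub_apply]
  abel

end NormedSpace

section Real

variable {a b x f' g' : ℝ} {f g : ℝ → ℝ}

theorem min_le : min (f x) (g x) ≤ smoothBlend a b f g x :=
  min_le_lineMap smoothStep.mem_Icc

theorem min_le_deriv (hab : a ≤ b) (hf : HasDerivAt f f' x) (hg : HasDerivAt g g' x)
    (hfg : f x ≤ g x) : min f' g' ≤ deriv (smoothBlend a b f g) x := by
  rw [(hasDerivAt hf hg).deriv]
  exact le_add_of_le_of_nonneg (min_le_lineMap smoothStep.mem_Icc) <|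
    smul_nonneg (smoothStep.monotone hab).deriv_nonneg (sub_nonneg.2 hfg)

theorem deriv_le_max (hab : a ≤ b) (hf : HasDerivAt f f' x) (hg : HasDerivAt g g' x)
    (hgf : g x ≤ f x) : deriv (smoothBlend a b f g) x ≤ max f' g' := by
  rw [(hasDerivAt hf hg).deriv]
  exact add_le_of_le_of_nonpos (lineMap_le_max smoothStep.mem_Icc) <|
    smul_nonpos_of_nonneg_of_nonpos (smoothStep.monotone hab).deriv_nonneg (sub_nonpos.2 hgf)

end Real

end smoothBlend

/-- The coefficient `h₁` of `α_B` in the contact form `h₁ α_B + h₂ dθ` near the binding. -/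
def bindingCoeff (a b c : ℝ) : ℝ → ℝ :=
  smoothBlend a b (fun r ↦ c * exp (-(r ^ 2))) (fun r ↦ c * exp (-r))

/-- The coefficient `h₂` of `dθ` in the contact form `h₁ α_B + h₂ dθ` near the binding. -/
def angularCoeff (a b : ℝ) : ℝ → ℝ :=
  smoothBlend a b (fun r ↦ r ^ 2) (fun _ ↦ 1)

section Profiles

variable {a b c r : ℝ}

theorem bindingCoeff_pos (hc : 0 < c) : 0 < bindingCoeff a b c r :=
  (lt_min (by positivity) (by positivity)).trans_le smoothBlend.min_le

theorem deriv_bindingCoeff_neg (hab : a ≤ b) (hc : 0 < c) (hr : r ∈ Ioc 0 1) :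
    deriv (bindingCoeff a b c) r < 0 := by
  obtain ⟨hr₀, hr₁⟩ := hr
  have h_inner : HasDerivAt (fun x ↦ c * exp (-(x ^ 2))) (c * (exp (-(r ^ 2)) * -(2 * r))) r := by
    simpa using ((hasDerivAt_pow 2 r).fun_neg.exp).const_mul c
  have h_outer : HasDerivAt (fun x ↦ c * exp (-x)) (c * (exp (-r) * -1)) r :=
    (hasDerivAt_neg r).exp.const_mul c
  have h_le : c * exp (-r) ≤ c * exp (-(r ^ 2)) := by
    gcongr
    exact pow_le_of_le_one hr₀.le hr₁ two_ne_zero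
  refine (smoothBlend.deriv_le_max hab h_inner h_outer h_le).trans_lt (max_lt ?_ ?_)
  · exact mul_neg_of_pos_of_neg hc (mul_neg_of_pos_of_neg (exp_pos _) (by linarith))
  · exact mul_neg_of_pos_of_neg hc (mul_neg_of_pos_of_neg (exp_pos _) neg_one_lt_zero)

theorem angularCoeff_pos (hr : r ≠ 0) : 0 < angularCoeff a b r :=
  (lt_min (sq_pos_of_ne_zero hr) one_pos).trans_le <|
    smoothBlend.min_le (f := fun x ↦ x ^ 2) (g := fun _ ↦ 1)

theorem deriv_angularCoeff_nonneg (hab : a ≤ b) (hr : r ∈ Icc 0 1) :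
    0 ≤ deriv (angularCoeff a b) r := by
  obtain ⟨hr₀, hr₁⟩ := hr
  have h_sq : HasDerivAt (fun x : ℝ ↦ x ^ 2) (2 * r) r := by simpa using hasDerivAt_pow 2 r
  exact (le_min (by positivity) le_rfl).trans <|
    smoothBlend.min_le_deriv hab h_sq (hasDerivAt_const r 1) (pow_le_one₀ hr₀ hr₁)

theorem wronskian_bindingCoeff_angularCoeff_pos (hab : a ≤ b) (hc : 0 < c)
    (hr : r ∈ Ioc 0 1) :
    0 < bindingCoeff a b c r * deriv (angularCoeff a b) r -
      deriv (bindingCoeff a b c) r * angularCoeff a b r :=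
  sub_pos.2 <|
    (mul_neg_of_neg_of_pos (deriv_bindingCoeff_neg hab hc hr) (angularCoeff_pos hr.1.ne')).trans_le
      (mul_nonneg (bindingCoeff_pos hc).le (deriv_angularCoeff_nonneg hab (Ioc_subset_Icc_self hr)))

end Profiles

end

/-- For every `c > 0` there are `r₀ > 0`, `δ ∈ (0, r₀)` and smooth functions
`h₁, h₂` such that `h₁ r = c e^{-r²}`, `h₂ r = r²` on `[0,δ]`; `h₁ r = c e^{-r}` and
`h₂` constant on `[r₀ - δ, r₀]`; `h₁ > 0` on `[0,r₀]`; `h₁' < 0` on `(0,r₀]`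
(the symplectic condition on the pages); and the contact condition
`h₁ h₂' - h₁' h₂ > 0` on `(0,r₀]`. -/
theorem open_books_normal_form_profile_functions (c : ℝ) (hc : 0 < c) :
    ∃ r₀ : ℝ, 0 < r₀ ∧ ∃ δ : ℝ, δ ∈ Ioo 0 r₀ ∧ ∃ h₁ h₂ : ℝ → ℝ,
      ContDiff ℝ (⊤ : ℕ∞) h₁ ∧ ContDiff ℝ (⊤ : ℕ∞) h₂ ∧
      (∀ r ∈ Icc (0:ℝ) δ, h₁ r = c * Real.exp (-(r ^ 2)) ∧ h₂ r = r ^ 2) ∧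
      (∃ k : ℝ, ∀ r ∈ Icc (r₀ - δ) r₀, h₁ r = c * Real.exp (-r) ∧ h₂ r = k) ∧
      (∀ r ∈ Icc (0:ℝ) r₀, 0 < h₁ r) ∧
      (∀ r ∈ Ioc (0:ℝ) r₀, deriv h₁ r < 0) ∧
      (∀ r ∈ Ioc (0:ℝ) r₀, 0 < h₁ r * deriv h₂ r - deriv h₁ r * h₂ r) := by
  have hab : (1 / 4 : ℝ) < 3 / 4 := by norm_num
  refine ⟨1, one_pos, 1 / 4, ⟨by norm_num, by norm_num⟩,
    bindingCoeff (1 / 4) (3 / 4) c, angularCoeff (1 / 4) (3 / 4),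
    smoothBlend.contDiff (by fun_prop) (by fun_prop),
    smoothBlend.contDiff (by fun_prop) (by fun_prop), ?_, ⟨1, ?_⟩, ?_, ?_, ?_⟩
  · exact fun r hr ↦ ⟨smoothBlend.eq_left hab.le hr.2, smoothBlend.eq_left hab.le hr.2⟩
  · intro r hr
    have hbr : 3 / 4 ≤ r := by linarith [hr.1]
    exact ⟨smoothBlend.eq_right hab hbr, smoothBlend.eq_right hab hbr⟩
  · exact fun r _ ↦ bindingCoeff_pos hc
  · exact fun r hr ↦ deriv_bindingCoeff_neg hab.le hc hr
  · exact fun r hr ↦ wronskian_bindingCoeff_angularCoeff_pos hab.le hc hr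
end
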